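/- arXiv:1503.03634 — 3 statements merged into one kernel-verified Lean document; each statement's English description precedes it below -/
import Mathlib

section
/- For all integers n₁, n₂, n₃ ≥ 1, the integral c(n₁,n₂,n₃) := (2/π) ∫₀^π sin(n₁θ) sin(n₂θ) sin(n₃θ)/sin(θ) dθ equals 1 if condition (∗∗) holds, and equals 0 otherwise, where (∗∗) is: all three of n₁+n₂−n₃, n₂+n₃−n₁, n₃+n₁−n₂ are positive and n₁+n₂+n₃ is odd. -/
open Real

open MeasureTheory

/-!
The product formula for sines turns the integrand into a quarter of
`D (n₁ + n₂ - n₃) + D (n₂ + n₃ - n₁) + D (n₃ + n₁ - n₂) - D (n₁ + n₂ + n₃)`, where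
`D k θ = sin (k θ) / sin θ`. Because `D (k + 2) θ - D k θ = 2 cos ((k + 1) θ)` has integral `0`
over `[0, π]` for `k ≠ -1`, and `D` is odd in `k`, the integral of `D k` is `π · sign k` for odd
`k` and `0` for even `k`. When `n₁ + n₂ + n₃` is odd, the three differences are nonzero with
pairwise sums `2 nᵢ`, so at most one of them is negative: the signs combine to `2` if none is, and
to `0` otherwise.
-/

lemma ae_sin_ne_zero : ∀ᵐ θ : ℝ, sin θ ≠ 0 := by
  have hzeros : {θ : ℝ | sin θ = 0} = Set.range fun n : ℤ => (n : ℝ) * π := by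
    ext θ
    exact sin_eq_zero_iff
  simpa [ae_iff, hzeros] using (Set.countable_range fun n : ℤ => (n : ℝ) * π).measure_zero volume

lemma intervalIntegrable_sin_int_mul_div_sin (k : ℤ) (a b : ℝ) :
    IntervalIntegrable (fun θ => sin (k * θ) / sin θ) volume a b := by
  have hU : Continuous fun θ => (Polynomial.Chebyshev.U ℝ (k - 1)).eval (cos θ) :=
    (Polynomial.Chebyshev.U ℝ (k - 1)).continuous.comp continuous_cos
  refine (hU.intervalIntegrable a b).congr_ae (ae_restrict_of_ae ?_)
  filter_upwards [ae_sin_ne_zero] with θ hθ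
  rw [eq_div_iff hθ, Polynomial.Chebyshev.U_real_cos]
  simp

lemma sin_add_two_mul_div_sin (x : ℝ) {θ : ℝ} (hθ : sin θ ≠ 0) :
    sin ((x + 2) * θ) / sin θ = sin (x * θ) / sin θ + 2 * cos ((x + 1) * θ) := by
  have hsub : sin ((x + 2) * θ) - sin (x * θ) = 2 * sin θ * cos ((x + 1) * θ) := by
    rw [sin_sub_sin]
    ring_nf
  rw [← sub_eq_iff_eq_add', ← sub_div, hsub]
  field_simp

lemma integral_cos_int_mul {k : ℤ} (hk : k ≠ 0) : ∫ θ in (0 : ℝ)..π, cos (k * θ) = 0 := by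
  rw [intervalIntegral.integral_comp_mul_left _ (Int.cast_ne_zero.mpr hk), integral_cos,
    sin_int_mul_pi]
  simp

lemma integral_sin_int_add_two_mul_div_sin {k : ℤ} (hk : k + 1 ≠ 0) :
    ∫ θ in (0 : ℝ)..π, sin ((k + 2 : ℤ) * θ) / sin θ = ∫ θ in (0 : ℝ)..π, sin (k * θ) / sin θ := by
  calc ∫ θ in (0 : ℝ)..π, sin ((k + 2 : ℤ) * θ) / sin θ
      = ∫ θ in (0 : ℝ)..π, (sin (k * θ) / sin θ + 2 * cos ((k + 1 : ℤ) * θ)) := by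
        refine intervalIntegral.integral_congr_ae ?_
        filter_upwards [ae_sin_ne_zero] with θ hθ _
        exact_mod_cast sin_add_two_mul_div_sin k hθ
    _ = ∫ θ in (0 : ℝ)..π, sin (k * θ) / sin θ := by
        rw [intervalIntegral.integral_add (intervalIntegrable_sin_int_mul_div_sin k 0 π)
          (Continuous.intervalIntegrable (by fun_prop) 0 π),
          intervalIntegral.integral_const_mul, integral_cos_int_mul hk, mul_zero, add_zero]

lemma integral_sin_nat_mul_div_sin (n : ℕ) :
    ∫ θ in (0 : ℝ)..π, sin (n * θ) / sin θ = if Odd n then π else 0 := by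
  induction n using Nat.twoStepInduction with
  | zero => simp
  | one =>
    have hone : ∫ θ in (0 : ℝ)..π, sin θ / sin θ = ∫ _ in (0 : ℝ)..π, (1 : ℝ) := by
      refine intervalIntegral.integral_congr_ae ?_
      filter_upwards [ae_sin_ne_zero] with θ hθ _
      exact div_self hθ
    simp [hone]
  | more n ih _ =>
    have hstep := integral_sin_int_add_two_mul_div_sin (k := n) (by lia)
    push_cast at hstep ⊢
    rw [hstep, ih]
    simp [Nat.odd_add]

lemma integral_sin_int_mul_div_sin (k : ℤ) :
    ∫ θ in (0 : ℝ)..π, sin (k * θ) / sin θ = if Odd k then k.sign * π else 0 := by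
  have hnat (n : ℕ) : ∫ θ in (0 : ℝ)..π, sin (n * θ) / sin θ =
      if Odd (n : ℤ) then (n : ℤ).sign * π else 0 := by
    rw [integral_sin_nat_mul_div_sin]
    rcases n.eq_zero_or_pos with rfl | hn
    · simp
    · simp [Int.sign_eq_one_of_pos (Int.natCast_pos.mpr hn)]
  obtain ⟨n, rfl | rfl⟩ := k.eq_nat_or_neg
  · exact_mod_cast hnat n
  · simp only [Int.cast_neg, Int.cast_natCast, neg_mul, sin_neg, neg_div,
      intervalIntegral.integral_neg, hnat, odd_neg, Int.sign_neg]
    split_ifs <;> simp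

lemma four_mul_sin_mul_sin_mul_sin (x y z : ℝ) :
    4 * (sin x * sin y * sin z) =
      sin (x + y - z) + sin (y + z - x) + sin (z + x - y) - sin (x + y + z) := by
  simp only [sin_add, sin_sub, cos_add]
  ring

lemma integral_sin_mul_sin_mul_sin_div_sin (a b c : ℤ) :
    ∫ θ in (0 : ℝ)..π, sin (a * θ) * sin (b * θ) * sin (c * θ) / sin θ =
      if Odd (a + b + c) then
        ((a + b - c).sign + (b + c - a).sign + (c + a - b).sign - (a + b + c).sign : ℤ) * π / 4
      else 0 := by
  -- Where `sin θ = 0`, both sides are `0` because division by zero gives `0`.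
  have hsplit (θ : ℝ) : sin (a * θ) * sin (b * θ) * sin (c * θ) / sin θ =
      (sin ((a + b - c : ℤ) * θ) / sin θ + sin ((b + c - a : ℤ) * θ) / sin θ
        + sin ((c + a - b : ℤ) * θ) / sin θ - sin ((a + b + c : ℤ) * θ) / sin θ) / 4 := by
    have hprod := four_mul_sin_mul_sin_mul_sin (a * θ) (b * θ) (c * θ)
    simp only [← add_mul, ← sub_mul] at hprod
    push_cast
    linear_combination hprod / (4 * sin θ)
  have hint (k : ℤ) := intervalIntegrable_sin_int_mul_div_sin k 0 π
  have hodd₁ : Odd (a + b - c) ↔ Odd (a + b + c) := by grind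
  have hodd₂ : Odd (b + c - a) ↔ Odd (a + b + c) := by grind
  have hodd₃ : Odd (c + a - b) ↔ Odd (a + b + c) := by grind
  simp only [hsplit]
  rw [intervalIntegral.integral_div,
    intervalIntegral.integral_sub (((hint _).add (hint _)).add (hint _)) (hint _),
    intervalIntegral.integral_add ((hint _).add (hint _)) (hint _),
    intervalIntegral.integral_add (hint _) (hint _)]
  simp only [integral_sin_int_mul_div_sin, hodd₁, hodd₂, hodd₃]
  split_ifs
  · push_cast
    ring
  · simp

lemma sign_add_sign_add_sign_sub_sign_add {x y z : ℤ} (hx : x ≠ 0) (hy : y ≠ 0) (hz : z ≠ 0)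
    (hxy : 0 ≤ x + y) (hyz : 0 ≤ y + z) (hzx : 0 ≤ z + x) :
    x.sign + y.sign + z.sign - (x + y + z).sign = if 0 < x ∧ 0 < y ∧ 0 < z then 2 else 0 := by
  have hsum : (x + y + z).sign = 1 := Int.sign_eq_one_of_pos (by lia)
  rw [hsum]
  by_cases hpos : 0 < x ∧ 0 < y ∧ 0 < z
  · obtain ⟨hx₀, hy₀, hz₀⟩ := hpos
    simp [Int.sign_eq_one_of_pos, hx₀, hy₀, hz₀]
  · rw [if_neg hpos]
    obtain hneg | hneg | hneg : x < 0 ∧ 0 < y ∧ 0 < z ∨ 0 < x ∧ y < 0 ∧ 0 < z ∨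
        0 < x ∧ 0 < y ∧ z < 0 := by lia
    all_goals simp [Int.sign_eq_one_of_pos, Int.sign_eq_neg_one_of_neg, hneg]

/-- For positive integers `n₁, n₂, n₃`,
`c(n₁,n₂,n₃) := (2/π) ∫₀^π sin(n₁θ)sin(n₂θ)sin(n₃θ)/sin(θ) dθ` equals `1` if
condition (∗∗) holds (all of `n₁+n₂−n₃`, `n₂+n₃−n₁`, `n₃+n₁−n₂` are positive
and `n₁+n₂+n₃` is odd), and `0` otherwise. -/
theorem c_eq_indicator (n₁ n₂ n₃ : ℕ) (h₁ : 1 ≤ n₁) (h₂ : 1 ≤ n₂) (h₃ : 1 ≤ n₃) :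
    (2 / π) * ∫ θ in (0:ℝ)..π,
        Real.sin ((n₁ : ℝ) * θ) * Real.sin ((n₂ : ℝ) * θ) * Real.sin ((n₃ : ℝ) * θ)
          / Real.sin θ
      = if n₃ < n₁ + n₂ ∧ n₁ < n₂ + n₃ ∧ n₂ < n₃ + n₁ ∧ Odd (n₁ + n₂ + n₃)
        then 1 else 0 := by
  have hintegral := integral_sin_mul_sin_mul_sin_div_sin n₁ n₂ n₃
  simp only [Int.cast_natCast] at hintegral
  have hparity : Odd ((n₁ : ℤ) + n₂ + n₃) ↔ Odd (n₁ + n₂ + n₃) := by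
    exact_mod_cast Int.odd_coe_nat (n₁ + n₂ + n₃)
  rw [hintegral]
  simp only [hparity]
  by_cases hodd : Odd (n₁ + n₂ + n₃)
  · have hsign := sign_add_sign_add_sign_sub_sign_add (x := n₁ + n₂ - n₃) (y := n₂ + n₃ - n₁)
      (z := n₃ + n₁ - n₂) (by grind) (by grind) (by grind) (by lia) (by lia) (by lia)
    have hsum : (n₁ + n₂ - n₃ + (n₂ + n₃ - n₁) + (n₃ + n₁ - n₂) : ℤ) = n₁ + n₂ + n₃ := by ring
    have htriangle : (0 < (n₁ + n₂ - n₃ : ℤ) ∧ 0 < (n₂ + n₃ - n₁ : ℤ) ∧ 0 < (n₃ + n₁ - n₂ : ℤ)) ↔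
        n₃ < n₁ + n₂ ∧ n₁ < n₂ + n₃ ∧ n₂ < n₃ + n₁ := by lia
    rw [hsum] at hsign
    simp only [hodd, if_true, and_true, hsign, htriangle]
    split_ifs
    · push_cast
      field_simp
      norm_num
    · simp
  · simp [hodd]
end

section
/- For every complex number s with Re(s) > 0, the series ∑ over triples (n₁,n₂,n₃) of positive integers satisfying condition (∗∗) of (n₁n₂n₃)^{−(s+1)} converges absolutely and equals the (absolutely convergent) series ∑_{m₁,m₂,m₃ ≥ 0} ((m₁+m₂+1)(m₂+m₃+1)(m₃+m₁+1))^{−(s+1)}. -/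
/-- The set of triples of positive integers satisfying condition (∗∗). -/
def starStarSet : Set (ℕ × ℕ × ℕ) :=
  {n | 1 ≤ n.1 ∧ 1 ≤ n.2.1 ∧ 1 ≤ n.2.2 ∧
       n.2.2 < n.1 + n.2.1 ∧ n.1 < n.2.1 + n.2.2 ∧ n.2.1 < n.2.2 + n.1 ∧
       Odd (n.1 + n.2.1 + n.2.2)}

/-!
The Ravi substitution `n₁ = m₁ + m₂ + 1`, `n₂ = m₂ + m₃ + 1`, `n₃ = m₃ + m₁ + 1` is a bijection
from triples of natural numbers onto the triples satisfying (∗∗): `n₁ + n₂ - n₃` is odd and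
positive, hence of the form `2 m₂ + 1`, and likewise for the other two. The series over (∗∗)
converges absolutely because it is part of the series over all triples, which is dominated by the
cube of a one-variable series.
-/

theorem ravi_mem_starStarSet (m₁ m₂ m₃ : ℕ) :
    (m₁ + m₂ + 1, m₂ + m₃ + 1, m₃ + m₁ + 1) ∈ starStarSet := by
  have hodd : Odd (m₁ + m₂ + 1 + (m₂ + m₃ + 1) + (m₃ + m₁ + 1)) := ⟨m₁ + m₂ + m₃ + 1, by ring⟩
  refine ⟨?_, ?_, ?_, ?_, ?_, ?_, hodd⟩ <;> dsimp only <;> omega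

/-- The Ravi substitution `(m₁, m₂, m₃) ↦ (m₁ + m₂ + 1, m₂ + m₃ + 1, m₃ + m₁ + 1)`, which
parametrizes the triples satisfying (∗∗) by triples of natural numbers. The inverse is written with
the semiperimeter `k = (n₁ + n₂ + n₃) / 2`, rounded down: since `n₁ + n₂ + n₃ = 2 k + 1`, the
inequalities in (∗∗) say that no `nᵢ` exceeds `k`, so the subtractions do not truncate. -/
def raviEquiv : ℕ × ℕ × ℕ ≃ starStarSet where
  toFun m := ⟨(m.1 + m.2.1 + 1, m.2.1 + m.2.2 + 1, m.2.2 + m.1 + 1),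
    ravi_mem_starStarSet m.1 m.2.1 m.2.2⟩
  invFun n := ((n.1.1 + n.1.2.1 + n.1.2.2) / 2 - n.1.2.1, (n.1.1 + n.1.2.1 + n.1.2.2) / 2 - n.1.2.2,
    (n.1.1 + n.1.2.1 + n.1.2.2) / 2 - n.1.1)
  left_inv := by
    rintro ⟨m₁, m₂, m₃⟩
    have hk : (m₁ + m₂ + 1 + (m₂ + m₃ + 1) + (m₃ + m₁ + 1)) / 2 = m₁ + m₂ + m₃ + 1 := by omega
    ext <;> simp only [hk] <;> omega
  right_inv := by
    rintro ⟨⟨n₁, n₂, n₃⟩, -, -, -, h₃, h₁, h₂, k, hsum⟩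
    dsimp only at h₃ h₁ h₂ hsum
    have hk : (n₁ + n₂ + n₃) / 2 = k := by omega
    ext <;> simp only [hk] <;> omega

section CompletelyMultiplicative

variable {M R F : Type*} [NormedRing R]

theorem summable_norm_map_mul_mul [Mul M] [FunLike F M R] [MulHomClass F M R] {f : F}
    (hf : Summable fun n => ‖f n‖) :
    Summable fun n : M × M × M => ‖f (n.1 * n.2.1 * n.2.2)‖ := by
  simpa only [map_mul, mul_assoc] using hf.mul_norm (hf.mul_norm hf)

theorem star_star_series_eq_general [CompleteSpace R] [FunLike F ℕ R] [MulHomClass F ℕ R] {f : F}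
    (hf : Summable fun n => ‖f n‖) :
    Summable (fun n : starStarSet => ‖f (n.1.1 * n.1.2.1 * n.1.2.2)‖) ∧
    Summable (fun m : ℕ × ℕ × ℕ =>
      ‖f ((m.1 + m.2.1 + 1) * (m.2.1 + m.2.2 + 1) * (m.2.2 + m.1 + 1))‖) ∧
    HasSum (fun m : ℕ × ℕ × ℕ => f ((m.1 + m.2.1 + 1) * (m.2.1 + m.2.2 + 1) * (m.2.2 + m.1 + 1)))
      (∑' n : starStarSet, f (n.1.1 * n.1.2.1 * n.1.2.2)) := by
  have hn : Summable (fun n : starStarSet => ‖f (n.1.1 * n.1.2.1 * n.1.2.2)‖) :=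
    (summable_norm_map_mul_mul hf).subtype starStarSet
  exact ⟨hn, (raviEquiv.summable_iff.2 hn :), (raviEquiv.hasSum_iff.2 hn.of_norm.hasSum :)⟩

end CompletelyMultiplicative

/-- For `Re(s) > 0`, the series `∑_{(n₁,n₂,n₃) with (∗∗)} (n₁n₂n₃)^{-(s+1)}`
converges absolutely and equals the absolutely convergent series
`∑_{m₁,m₂,m₃ ≥ 0} ((m₁+m₂+1)(m₂+m₃+1)(m₃+m₁+1))^{-(s+1)}`. -/
theorem star_star_series_eq (s : ℂ) (hs : 0 < s.re) :
    Summable (fun n : starStarSet =>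
      ‖((n.1.1 * n.1.2.1 * n.1.2.2 : ℕ) : ℂ) ^ (-(s + 1))‖) ∧
    Summable (fun m : ℕ × ℕ × ℕ =>
      ‖(((m.1 + m.2.1 + 1) * (m.2.1 + m.2.2 + 1) * (m.2.2 + m.1 + 1) : ℕ) : ℂ) ^ (-(s + 1))‖) ∧
    ∑' n : starStarSet, ((n.1.1 * n.1.2.1 * n.1.2.2 : ℕ) : ℂ) ^ (-(s + 1))
      = ∑' m : ℕ × ℕ × ℕ,
          (((m.1 + m.2.1 + 1) * (m.2.1 + m.2.2 + 1) * (m.2.2 + m.1 + 1) : ℕ) : ℂ) ^ (-(s + 1)) := by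
  have hs' : 1 < (s + 1).re := by simpa using hs
  -- The summand homomorphism here is `n ↦ (n : ℂ) ^ (-(s + 1))`, by definitional unfolding.
  obtain ⟨hn, hm, hsum⟩ := star_star_series_eq_general (summable_riemannZetaSummand hs')
  exact ⟨hn, hm, hsum.tsum_eq.symm⟩
end

section
/- For every complex number s with Re(s) > −2, the series ∑_{n=1}^∞ n^{−(s+3)} · ((2/π) ∫₀^π sin(nθ)³/sin(θ) dθ) converges absolutely and equals (1 − 2^{−(s+3)})·ζ(s+3). (This is the triple convolution mean value ∫_{SU(2)} ζ_{SU(2)}(s,(g,g,g)) dg = (1 − 2^{−s−3})ζ(s+3).) -/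
/-!
The character of the `n`-dimensional irreducible representation of `SU(2)` is
`sin (n θ) / sin θ = U_{n-1} (cos θ)`, with `U` the Chebyshev polynomials of the second kind. The
triple-angle formula rewrites `sin (n θ) ^ 3 / sin θ` as `(3 U_{n-1} - U_{3n-1}) / 4` at `cos θ`.
Since `U_{m+2} = 2 T_{m+2} + U_m` and `∫ T_m (cos θ) dθ = 0` for `m ≠ 0`, the integral of
`U_m (cos θ)` over `[0, π]` is `π` for even `m` and `0` for odd `m`. Hence the `n`-th normalized
Weyl integral is the value at `n` of the trivial Dirichlet character mod `2`, whose `L`-function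
is `ζ` without its Euler factor at `2`.
-/

open Real

section WeylIntegral

open Polynomial.Chebyshev MeasureTheory

lemma sin_add_one_mul_div_sin {θ : ℝ} (hθ : sin θ ≠ 0) (n : ℤ) :
    sin ((n + 1) * θ) / sin θ = (U ℝ n).eval (cos θ) := by
  rw [← U_real_cos, mul_div_cancel_right₀ _ hθ]

lemma sin_add_one_mul_pow_three_div_sin {θ : ℝ} (hθ : sin θ ≠ 0) (n : ℤ) :
    sin ((n + 1) * θ) ^ 3 / sin θ
      = 3 / 4 * (U ℝ n).eval (cos θ) - 1 / 4 * (U ℝ (3 * n + 2)).eval (cos θ) := by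
  have hangle : (((3 * n + 2 : ℤ) : ℝ) + 1) * θ = 3 * ((n + 1) * θ) := by push_cast; ring
  rw [← sin_add_one_mul_div_sin hθ, ← sin_add_one_mul_div_sin hθ, hangle, sin_three_mul]
  ring

lemma integrable_eval_U_real_measureT (n : ℤ) :
    Integrable (fun x => (U ℝ n).eval x) measureT :=
  integrable_measureT (by fun_prop)

lemma integral_eval_U_real_add_two_measureT {n : ℤ} (hn : n + 2 ≠ 0) :
    ∫ x, (U ℝ (n + 2)).eval x ∂measureT = ∫ x, (U ℝ n).eval x ∂measureT := by
  have hT : Integrable (fun x => 2 * (T ℝ (n + 2)).eval x) measureT :=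
    integrable_measureT (by fun_prop)
  simp only [U_eq_two_mul_T_add_U, Polynomial.eval_add, Polynomial.eval_mul,
    Polynomial.eval_ofNat]
  rw [integral_add hT (integrable_eval_U_real_measureT n), integral_const_mul,
    integral_eval_T_real_measureT_of_ne_zero hn, mul_zero, zero_add]

lemma integral_eval_U_real_measureT (n : ℕ) :
    ∫ x, (U ℝ n).eval x ∂measureT = if Even n then π else 0 := by
  induction n using Nat.twoStepInduction with
  | zero => simpa using integral_eval_T_real_measureT_zero
  | one => simpa using integral_eval_U_real_add_two_measureT (n := -1) (by norm_num)
  | more n ih _ =>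
    push_cast
    rw [integral_eval_U_real_add_two_measureT (by positivity), ih]
    simp only [Nat.even_add, even_two, iff_true]

lemma integral_sin_add_one_mul_pow_three_div_sin (n : ℕ) :
    ∫ θ in (0:ℝ)..π, sin ((n + 1) * θ) ^ 3 / sin θ = if Even n then π / 2 else 0 := by
  have hparity : Even (3 * n + 2) ↔ Even n := by grind
  calc
    ∫ θ in (0:ℝ)..π, sin ((n + 1) * θ) ^ 3 / sin θ
    _ = ∫ θ in (0:ℝ)..π, (3 / 4 * (U ℝ n).eval (cos θ)
          - 1 / 4 * (U ℝ (3 * n + 2 : ℕ)).eval (cos θ)) :=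
      intervalIntegral.integral_congr_Ioo_of_le pi_nonneg fun θ hθ => by
        exact_mod_cast sin_add_one_mul_pow_three_div_sin (sin_pos_of_mem_Ioo hθ).ne' n
    _ = ∫ x, (3 / 4 * (U ℝ n).eval x - 1 / 4 * (U ℝ (3 * n + 2 : ℕ)).eval x) ∂measureT := by
      rw [integral_measureT_eq_integral_cos]
    _ = 3 / 4 * ∫ x, (U ℝ n).eval x ∂measureT
          - 1 / 4 * ∫ x, (U ℝ (3 * n + 2 : ℕ)).eval x ∂measureT := by
      rw [integral_sub ((integrable_eval_U_real_measureT _).const_mul _)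
          ((integrable_eval_U_real_measureT _).const_mul _),
        integral_const_mul, integral_const_mul]
    _ = if Even n then π / 2 else 0 := by
      simp only [integral_eval_U_real_measureT, hparity]
      split_ifs <;> ring

lemma two_div_pi_mul_integral_sin_add_one_mul_pow_three_div_sin (n : ℕ) :
    2 / π * ∫ θ in (0:ℝ)..π, sin ((n + 1) * θ) ^ 3 / sin θ = if Even n then 1 else 0 := by
  rw [integral_sin_add_one_mul_pow_three_div_sin]
  split_ifs
  · field_simp
  · exact mul_zero _

end WeylIntegral

section DirichletSeries

lemma hasSum_add_one_cpow_mul_dirichletCharacter {N : ℕ} [NeZero N] (χ : DirichletCharacter ℂ N)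
    {s : ℂ} (hs : 1 < s.re) :
    HasSum (fun n : ℕ => ((n : ℂ) + 1) ^ (-s) * χ (n + 1)) (χ.LFunction s) := by
  have hseries : HasSum (LSeries.term (χ ·) s) (χ.LFunction s) := by
    rw [χ.LFunction_eq_LSeries hs]
    exact (χ.LSeriesSummable_of_one_lt_re hs).LSeriesHasSum
  rw [← hasSum_nat_add_iff' 1] at hseries
  simpa [LSeries.term, div_eq_inv_mul, Complex.cpow_neg] using hseries

lemma hasSum_add_one_cpow_mul_ite_coprime (N : ℕ) [NeZero N] {s : ℂ} (hs : 1 < s.re) :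
    HasSum (fun n : ℕ => ((n : ℂ) + 1) ^ (-s) * if (n + 1).Coprime N then 1 else 0)
      ((∏ p ∈ N.primeFactors, (1 - (p : ℂ) ^ (-s))) * riemannZeta s) := by
  have hs₁ : s ≠ 1 := by rintro rfl; simp at hs
  have hχ (n : ℕ) : (1 : DirichletCharacter ℂ N) (n + 1) = if (n + 1).Coprime N then 1 else 0 := by
    rw [← Nat.cast_add_one]
    split_ifs with hn
    · exact MulChar.one_apply ((ZMod.isUnit_iff_coprime _ _).mpr hn)
    · exact MulChar.map_nonunit _ (mt (ZMod.isUnit_iff_coprime _ _).mp hn)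
  simpa only [hχ, DirichletCharacter.LFunctionTrivChar_eq_mul_riemannZeta hs₁] using
    hasSum_add_one_cpow_mul_dirichletCharacter (1 : DirichletCharacter ℂ N) hs

end DirichletSeries

/-- The triple convolution mean value of the Witten L-function of SU(2):
for `Re(s) > −2`, the series
`∑_{n≥1} n^{-(s+3)} · (2/π)∫₀^π sin(nθ)³/sinθ dθ`
converges absolutely and equals `(1 − 2^{-(s+3)}) ζ(s+3)`. -/
theorem triple_convolution_mean_value (s : ℂ) (hs : -2 < s.re) :
    Summable (fun n : ℕ => ‖((n : ℂ) + 1) ^ (-(s + 3))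
      * (((2 / π) * ∫ θ in (0:ℝ)..π,
          (Real.sin (((n : ℝ) + 1) * θ)) ^ 3 / Real.sin θ : ℝ) : ℂ)‖) ∧
    ∑' n : ℕ, ((n : ℂ) + 1) ^ (-(s + 3))
        * (((2 / π) * ∫ θ in (0:ℝ)..π,
            (Real.sin (((n : ℝ) + 1) * θ)) ^ 3 / Real.sin θ : ℝ) : ℂ)
      = (1 - (2 : ℂ) ^ (-(s + 3))) * riemannZeta (s + 3) := by
  have hs₁ : 1 < (s + 3).re := by
    rw [Complex.add_re, Complex.re_ofNat]
    linarith
  have hcoprime (n : ℕ) : Even n ↔ (n + 1).Coprime 2 := by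
    rw [Nat.coprime_two_right, Nat.odd_add_one, Nat.not_odd_iff_even]
  have hsum := hasSum_add_one_cpow_mul_ite_coprime 2 hs₁
  simp only [Nat.prime_two.primeFactors, Finset.prod_singleton, Nat.cast_ofNat] at hsum
  simp only [two_div_pi_mul_integral_sin_add_one_mul_pow_three_div_sin, hcoprime,
    apply_ite Complex.ofReal, Complex.ofReal_one, Complex.ofReal_zero]
  exact ⟨hsum.summable.norm, hsum.tsum_eq⟩
end
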